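/- Let (u,τ) be a classical solution of the p-system on ℝ×[0,T) (T a finite positive constant or infinity), twice continuously differentiable, such that at t=0 the functions u(·,0), τ(·,0)>0, ρ(·,0)=1/τ(·,0), α(·,0), β(·,0) are all uniformly bounded. Then the maximum rarefaction is non-increasing in time: for any 0 ≤ t₁ ≤ t₂ < T, sup_{x∈ℝ} max{α(x,t₂), β(x,t₂)} ≤ sup_{x∈ℝ} max{α(x,t₁), β(x,t₁)}. -/

import Mathlib

open Real Set MeasureTheory

noncomputable section

/-- Partial derivative in the spatial variable `x`. -/
def pdx (f : ℝ → ℝ → ℝ) (x t : ℝ) : ℝ := deriv (fun y => f y t) x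

/-- Partial derivative in the time variable `t`. -/
def pdt (f : ℝ → ℝ → ℝ) (x t : ℝ) : ℝ := deriv (fun s => f x s) t

/-- The time strip `ℝ × [0, T)`, where `T` is a real number or `+∞`. -/
def strip (T : EReal) : Set (ℝ × ℝ) := {p : ℝ × ℝ | 0 ≤ p.2 ∧ (p.2 : EReal) < T}

/-- `η = (2√(Kγ)/(γ−1)) τ^{−(γ−1)/2}`. -/
def etaP (K γ : ℝ) (τ : ℝ → ℝ → ℝ) (x t : ℝ) : ℝ :=
  2 * Real.sqrt (K * γ) / (γ - 1) * τ x t ^ (-(γ - 1) / 2)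

/-- Gradient variable `α = s_x = u_x + η_x` for the p-system. -/
def alphaP (K γ : ℝ) (u τ : ℝ → ℝ → ℝ) (x t : ℝ) : ℝ :=
  pdx u x t + pdx (etaP K γ τ) x t

/-- Gradient variable `β = r_x = u_x − η_x` for the p-system. -/
def betaP (K γ : ℝ) (u τ : ℝ → ℝ → ℝ) (x t : ℝ) : ℝ :=
  pdx u x t - pdx (etaP K γ τ) x t

/-- The p-system `τ_t − u_x = 0`, `u_t + p_x = 0` with `p = K τ^{−γ}`, at the point `(x,t)`. -/
def pSystem (K γ : ℝ) (u τ : ℝ → ℝ → ℝ) (x t : ℝ) : Prop :=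
  pdt τ x t - pdx u x t = 0 ∧
  pdt u x t + pdx (fun y s => K * τ y s ^ (-γ)) x t = 0

/-- Riemann invariant `s = u + η`. -/
def sRi (K γ : ℝ) (u τ : ℝ → ℝ → ℝ) (x t : ℝ) : ℝ := u x t + etaP K γ τ x t

/-- Riemann invariant `r = u − η`. -/
def rRi (K γ : ℝ) (u τ : ℝ → ℝ → ℝ) (x t : ℝ) : ℝ := u x t - etaP K γ τ x t

/-- The Lagrangian wave speed `c = √(Kγ) τ^{−(γ+1)/2}`. -/
def cP (K γ : ℝ) (τ : ℝ → ℝ → ℝ) (x t : ℝ) : ℝ :=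
  Real.sqrt (K * γ) * τ x t ^ (-(γ + 1) / 2)

/-- The constant `K_τ = (2√(Kγ)/(γ−1))^{2/(γ−1)}`. -/
def KtauC (K γ : ℝ) : ℝ := (2 * Real.sqrt (K * γ) / (γ - 1)) ^ (2 / (γ - 1))

/-- The constant `K_c = √(Kγ) K_τ^{−(γ+1)/2}`. -/
def KcC (K γ : ℝ) : ℝ := Real.sqrt (K * γ) * KtauC K γ ^ (-(γ + 1) / 2)

/-- `k₁ = ((γ+1)K_c/(2(γ−1))) η^{2/(γ−1)}`. -/
def k1P (K γ : ℝ) (τ : ℝ → ℝ → ℝ) (x t : ℝ) : ℝ :=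
  (γ + 1) * KcC K γ / (2 * (γ - 1)) * etaP K γ τ x t ^ (2 / (γ - 1))

open Filter Topology

theorem le_fderiv_of_backward_le {F : ℝ × ℝ → ℝ} {p : ℝ × ℝ} {v ε : ℝ}
    (hF : DifferentiableAt ℝ F p)
    (h : ∀ᶠ h in 𝓝[>] (0 : ℝ), F (p + h • ((-v, -1) : ℝ × ℝ)) ≤ F p - ε * h) :
    ε ≤ fderiv ℝ F p (v, 1) := by
  have hl : HasDerivAt (fun h : ℝ => p + h • ((-v, -1) : ℝ × ℝ)) (-v, -1) 0 := by
    simpa using ((hasDerivAt_id (0 : ℝ)).smul_const ((-v, -1) : ℝ × ℝ)).const_add p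
  have hd : HasDerivAt (fun h : ℝ => F (p + h • ((-v, -1) : ℝ × ℝ)))
      (fderiv ℝ F p (-v, -1)) 0 :=
    HasFDerivAt.comp_hasDerivAt_of_eq 0 hF.hasFDerivAt hl (by simp)
  have hle : fderiv ℝ F p (-v, -1) ≤ -ε := by
    refine le_of_tendsto hd.tendsto_slope_zero_right ?_
    filter_upwards [h, self_mem_nhdsWithin] with h hh hpos
    have hpos : 0 < h := hpos
    simp only [zero_add, zero_smul, add_zero, smul_eq_mul]
    rw [inv_mul_le_iff₀ hpos]
    linarith
  have hneg : ((-v, -1) : ℝ × ℝ) = -(v, 1) := by simp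
  rw [hneg, map_neg] at hle
  linarith

/-- Comparison principle for two quantities transported with opposite bounded speeds. -/
theorem le_of_opposite_transport {f g c : ℝ × ℝ → ℝ} {m ε Λ t₀ t₂ : ℝ} (hε : 0 < ε) (hΛ : 0 ≤ Λ)
    (hfc : ContinuousOn f {p | t₀ ≤ p.2 ∧ p.2 ≤ t₂})
    (hgc : ContinuousOn g {p | t₀ ≤ p.2 ∧ p.2 ≤ t₂})
    (hfd : ∀ p : ℝ × ℝ, t₀ < p.2 → p.2 ≤ t₂ → DifferentiableAt ℝ f p)
    (hgd : ∀ p : ℝ × ℝ, t₀ < p.2 → p.2 ≤ t₂ → DifferentiableAt ℝ g p)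
    (hf₀ : ∀ x, f (x, t₀) ≤ m) (hg₀ : ∀ x, g (x, t₀) ≤ m)
    (hc₀ : ∀ p : ℝ × ℝ, t₀ < p.2 → p.2 ≤ t₂ → 0 ≤ c p)
    (hc : ∀ p : ℝ × ℝ, t₀ < p.2 → p.2 ≤ t₂ → f p ≤ m + ε * (1 + (p.2 - t₀)) →
      g p ≤ m + ε * (1 + (p.2 - t₀)) → c p ≤ Λ)
    (hf : ∀ p : ℝ × ℝ, t₀ < p.2 → p.2 ≤ t₂ → f p = m + ε * (1 + (p.2 - t₀)) →
      g p ≤ f p → fderiv ℝ f p (c p, 1) < ε)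
    (hg : ∀ p : ℝ × ℝ, t₀ < p.2 → p.2 ≤ t₂ → g p = m + ε * (1 + (p.2 - t₀)) →
      f p ≤ g p → fderiv ℝ g p (-c p, 1) < ε)
    (x₀ t : ℝ) (ht₀ : t₀ ≤ t) (ht : t ≤ t₂) :
    f (x₀, t) ≤ m + ε * (1 + (t - t₀)) ∧ g (x₀, t) ≤ m + ε * (1 + (t - t₀)) := by
  by_contra hcon
  set Ω : Set (ℝ × ℝ) := {p | (t₀ ≤ p.2 ∧ p.2 ≤ t) ∧ |p.1 - x₀| ≤ Λ * (t - p.2)} with hΩ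
  have hΩsub : Ω ⊆ {p | t₀ ≤ p.2 ∧ p.2 ≤ t₂} := fun p hp => ⟨hp.1.1, hp.1.2.trans ht⟩
  have hΩcl : IsClosed Ω := by
    have h₁ : IsClosed {p : ℝ × ℝ | t₀ ≤ p.2} := isClosed_le continuous_const continuous_snd
    have h₂ : IsClosed {p : ℝ × ℝ | p.2 ≤ t} := isClosed_le continuous_snd continuous_const
    have h₃ : IsClosed {p : ℝ × ℝ | |p.1 - x₀| ≤ Λ * (t - p.2)} :=
      isClosed_le (by fun_prop) (by fun_prop)
    exact (h₁.inter h₂).inter h₃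
  have hΩc : IsCompact Ω := by
    refine IsCompact.of_isClosed_subset
      ((isCompact_Icc (a := x₀ - |Λ| * (t - t₀)) (b := x₀ + |Λ| * (t - t₀))).prod
        (isCompact_Icc (a := t₀) (b := t))) hΩcl ?_
    rintro ⟨x, s⟩ ⟨⟨h1, h2⟩, h3⟩
    simp only at h1 h2 h3
    have h4 : Λ * (t - s) ≤ |Λ| * (t - t₀) :=
      mul_le_mul (le_abs_self _) (by linarith) (by linarith) (abs_nonneg _)
    rw [abs_le] at h3
    exact ⟨⟨by simp only; linarith, by simp only; linarith⟩, h1, h2⟩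
  set Bad : Set (ℝ × ℝ) :=
    Ω ∩ (fun p => max (f p) (g p) - (m + ε * (1 + (p.2 - t₀)))) ⁻¹' Ici 0 with hBad
  have hBadcl : IsClosed Bad := by
    refine ContinuousOn.preimage_isClosed_of_isClosed ?_ hΩcl isClosed_Ici
    exact ((hfc.mono hΩsub).sup (hgc.mono hΩsub)).sub (by fun_prop)
  have hBadc : IsCompact Bad := hΩc.of_isClosed_subset hBadcl inter_subset_left
  have hBadne : Bad.Nonempty := by
    refine ⟨(x₀, t), ⟨⟨ht₀, le_rfl⟩, by simp⟩, ?_⟩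
    simp only [mem_preimage, mem_Ici, sub_nonneg]
    by_contra h
    rw [not_le, max_lt_iff] at h
    exact hcon ⟨h.1.le, h.2.le⟩
  obtain ⟨p, hp, hmin⟩ := hBadc.exists_isMinOn hBadne continuous_snd.continuousOn
  obtain ⟨⟨⟨hp0, hp1⟩, hp2⟩, hp3⟩ := hp
  simp only [mem_preimage, mem_Ici, sub_nonneg] at hp3
  have hbefore : ∀ q ∈ Ω, q.2 < p.2 →
      f q < m + ε * (1 + (q.2 - t₀)) ∧ g q < m + ε * (1 + (q.2 - t₀)) := by
    intro q hq hlt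
    by_contra h
    have : q ∈ Bad := by
      refine ⟨hq, ?_⟩
      simp only [mem_preimage, mem_Ici, sub_nonneg]
      by_contra h'
      rw [not_le, max_lt_iff] at h'
      exact h h'
    exact absurd (hmin this) (not_le.mpr hlt)
  have hpt : t₀ < p.2 := by
    rcases hp0.lt_or_eq with h | h
    · exact h
    · have hpe : p = (p.1, t₀) := by rw [h]
      have h1 := hf₀ p.1
      have h2 := hg₀ p.1
      rw [← hpe] at h1 h2
      have := hp3.trans (max_le h1 h2)
      rw [← h] at this
      simp only [sub_self] at this
      linarith
  have hpt₂ : p.2 ≤ t₂ := hp1.trans ht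
  -- going backwards with a speed at most `Λ` stays inside the cone
  have hback : ∀ v : ℝ, |v| ≤ Λ → ∀ᶠ h in 𝓝[>] (0 : ℝ),
      p + h • ((-v, -1) : ℝ × ℝ) ∈ Ω ∧ (p + h • ((-v, -1) : ℝ × ℝ)).2 = p.2 - h ∧ 0 < h := by
    intro v hv
    have : ∀ᶠ h in 𝓝[>] (0 : ℝ), h < p.2 - t₀ :=
      nhdsWithin_le_nhds (Iio_mem_nhds (by linarith))
    filter_upwards [this, self_mem_nhdsWithin] with h hh hpos
    have hpos : 0 < h := hpos
    refine ⟨⟨⟨?_, ?_⟩, ?_⟩, ?_, hpos⟩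
    · simp; linarith
    · simp; linarith
    · simp only [Prod.fst_add, Prod.snd_add, Prod.smul_fst, Prod.smul_snd, smul_eq_mul]
      have h1 : p.1 + h * -v - x₀ = (p.1 - x₀) - h * v := by ring
      have h2 : |h * v| ≤ h * Λ := by
        rw [abs_mul, abs_of_pos hpos]; exact mul_le_mul_of_nonneg_left hv hpos.le
      rw [h1]
      refine (abs_sub _ _).trans ?_
      linarith
    · simp; ring
  have hline : ∀ v : ℝ, Tendsto (fun h : ℝ => p + h • ((-v, -1) : ℝ × ℝ)) (𝓝[>] 0) (𝓝 p) := by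
    intro v
    have : Continuous (fun h : ℝ => p + h • ((-v, -1) : ℝ × ℝ)) := by fun_prop
    have h := this.tendsto 0
    simp only [zero_smul, add_zero] at h
    exact h.mono_left nhdsWithin_le_nhds
  have hlim : ∀ F : ℝ × ℝ → ℝ, DifferentiableAt ℝ F p →
      (∀ q ∈ Ω, q.2 < p.2 → F q < m + ε * (1 + (q.2 - t₀))) →
      F p ≤ m + ε * (1 + (p.2 - t₀)) := by
    intro F hF hlt
    have hB : Continuous fun q : ℝ × ℝ => m + ε * (1 + (q.2 - t₀)) := by fun_prop
    refine le_of_tendsto_of_tendsto (hF.continuousAt.tendsto.comp (hline 0))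
      ((hB.tendsto p).comp (hline 0)) ?_
    filter_upwards [hback 0 (by simpa using hΛ)] with h hh
    exact (hlt _ hh.1 (by linarith [hh.2.1, hh.2.2])).le
  have hslope : ∀ (F : ℝ × ℝ → ℝ) (v : ℝ), DifferentiableAt ℝ F p → |v| ≤ Λ →
      (∀ q ∈ Ω, q.2 < p.2 → F q < m + ε * (1 + (q.2 - t₀))) →
      F p = m + ε * (1 + (p.2 - t₀)) → ε ≤ fderiv ℝ F p (v, 1) := by
    intro F v hF hv hlt hFp
    refine le_fderiv_of_backward_le hF ?_
    filter_upwards [hback v hv] with h hh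
    have := hlt _ hh.1 (by linarith [hh.2.1, hh.2.2])
    rw [hh.2.1] at this
    rw [hFp]
    linarith
  have hdf := hfd p hpt hpt₂
  have hdg := hgd p hpt hpt₂
  have hfp := hlim f hdf fun q hq h => (hbefore q hq h).1
  have hgp := hlim g hdg fun q hq h => (hbefore q hq h).2
  have hcp := hc p hpt hpt₂ hfp hgp
  have hc0 := hc₀ p hpt hpt₂
  rcases le_max_iff.mp hp3 with h | h
  · have hfe := le_antisymm hfp h
    have := hslope f (c p) hdf (by rwa [abs_of_nonneg hc0])
      (fun q hq h => (hbefore q hq h).1) hfe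
    exact absurd (hf p hpt hpt₂ hfe (hgp.trans h)) (not_lt.mpr this)
  · have hge := le_antisymm hgp h
    have := hslope g (-c p) hdg (by rwa [abs_neg, abs_of_nonneg hc0])
      (fun q hq h => (hbefore q hq h).2) hge
    exact absurd (hg p hpt hpt₂ hge (hfp.trans h)) (not_lt.mpr this)

/-- Differentiating `S_t + c S_x = 0` in `x`: the transport equation satisfied by `S_x`. -/
theorem fderiv_gradient_of_transport {S c : ℝ × ℝ → ℝ} {p : ℝ × ℝ}
    (hS : ContDiffAt ℝ 2 S p) (hc : DifferentiableAt ℝ c p)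
    (h : ∀ᶠ q in 𝓝 p, fderiv ℝ S q (0, 1) + c q * fderiv ℝ S q (1, 0) = 0) :
    DifferentiableAt ℝ (fun q => fderiv ℝ S q (1, 0)) p ∧
    fderiv ℝ (fun q => fderiv ℝ S q (1, 0)) p (c p, 1) =
      -(fderiv ℝ c p (1, 0) * fderiv ℝ S p (1, 0)) := by
  have hD : DifferentiableAt ℝ (fderiv ℝ S) p :=
    (hS.fderiv_right (m := 1) (by norm_num)).differentiableAt (by norm_num)
  have happ : ∀ w : ℝ × ℝ, HasFDerivAt (fun q => fderiv ℝ S q w)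
      ((fderiv ℝ (fderiv ℝ S) p).flip w) p := by
    intro w
    simpa using hD.hasFDerivAt.clm_apply (hasFDerivAt_const w p)
  have hsymm : fderiv ℝ (fderiv ℝ S) p (1, 0) (0, 1) = fderiv ℝ (fderiv ℝ S) p (0, 1) (1, 0) :=
    (hS.isSymmSndFDerivAt (by simp)).eq _ _
  have hsum := (happ (0, 1)).add (hc.hasFDerivAt.mul (happ (1, 0)))
  have hzero : HasFDerivAt (fun q => fderiv ℝ S q (0, 1) + c q * fderiv ℝ S q (1, 0))
      (0 : ℝ × ℝ →L[ℝ] ℝ) p :=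
    (hasFDerivAt_const (0 : ℝ) p).congr_of_eventuallyEq h
  have heq := DFunLike.congr_fun (hsum.unique hzero) ((1, 0) : ℝ × ℝ)
  simp only [add_apply, smul_apply,
    ContinuousLinearMap.flip_apply, smul_eq_mul, zero_apply] at heq
  refine ⟨(happ _).differentiableAt, ?_⟩
  rw [(happ (1, 0)).fderiv, ContinuousLinearMap.flip_apply]
  have hdecomp : ((c p, 1) : ℝ × ℝ) = c p • ((1, 0) : ℝ × ℝ) + (0, 1) := by simp
  rw [hdecomp, map_add, map_smul, add_apply,
    smul_apply, smul_eq_mul]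
  linarith

theorem isOpen_strip_interior (T : EReal) :
    IsOpen {p : ℝ × ℝ | 0 < p.2 ∧ (p.2 : EReal) < T} :=
  (isOpen_lt continuous_const continuous_snd).inter
    (isOpen_lt (continuous_coe_real_ereal.comp continuous_snd) continuous_const)

theorem strip_mem_nhds {T : EReal} {p : ℝ × ℝ} (h₀ : 0 < p.2) (hT : (p.2 : EReal) < T) :
    strip T ∈ 𝓝 p :=
  mem_of_superset ((isOpen_strip_interior T).mem_nhds ⟨h₀, hT⟩) fun _ hq => ⟨hq.1.le, hq.2⟩

theorem uniqueDiffOn_strip {T : EReal} (hT : 0 < T) : UniqueDiffOn ℝ (strip T) := by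
  refine uniqueDiffOn_convex ?_ ?_
  · have hJ : OrdConnected {t : ℝ | 0 ≤ t ∧ (t : EReal) < T} :=
      ⟨fun a ha b hb c hc => ⟨ha.1.trans hc.1, (EReal.coe_le_coe_iff.mpr hc.2).trans_lt hb.2⟩⟩
    exact hJ.convex.linear_preimage (LinearMap.snd ℝ ℝ ℝ)
  · obtain ⟨t, ht₀, htT⟩ := EReal.lt_iff_exists_real_btwn.mp hT
    exact ⟨(0, t), mem_interior_iff_mem_nhds.mpr
      (strip_mem_nhds (EReal.coe_pos.mp ht₀) htT)⟩

theorem hasDerivAt_slice {T : EReal} {F : ℝ × ℝ → ℝ}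
    (hF : ContDiffOn ℝ 2 F (strip T)) {x t : ℝ} (h : (x, t) ∈ strip T) :
    HasDerivAt (fun y => F (y, t)) (fderivWithin ℝ F (strip T) (x, t) (1, 0)) x := by
  have hl : HasDerivAt (fun y : ℝ => (y, t)) ((1 : ℝ), (0 : ℝ)) x :=
    (hasDerivAt_id x).prodMk (hasDerivAt_const x t)
  exact (((hF.differentiableOn (by norm_num)) (x, t) h).hasFDerivWithinAt).comp_hasDerivAt x hl
    (Eventually.of_forall fun y => h)

theorem contDiffOn_etaP {K γ : ℝ} {T : EReal} {τ : ℝ → ℝ → ℝ}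
    (hτ_reg : ContDiffOn ℝ 2 (fun p : ℝ × ℝ => τ p.1 p.2) (strip T))
    (hτ_pos : ∀ x t : ℝ, 0 ≤ t → (t : EReal) < T → 0 < τ x t) :
    ContDiffOn ℝ 2 (fun p : ℝ × ℝ => etaP K γ τ p.1 p.2) (strip T) :=
  contDiffOn_const.mul (hτ_reg.rpow_const_of_ne fun p hp => (hτ_pos p.1 p.2 hp.1 hp.2).ne')

theorem hasFDerivAt_etaP {K γ : ℝ} (hγ : 1 < γ) {τ : ℝ → ℝ → ℝ} {p : ℝ × ℝ}
    {τ' : ℝ × ℝ →L[ℝ] ℝ} (hτ : HasFDerivAt (fun p : ℝ × ℝ => τ p.1 p.2) τ' p)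
    (hpos : 0 < τ p.1 p.2) :
    HasFDerivAt (fun p : ℝ × ℝ => etaP K γ τ p.1 p.2) (-cP K γ τ p.1 p.2 • τ') p := by
  have h := (hτ.rpow_const (p := -(γ - 1) / 2) (Or.inl hpos.ne')).const_mul
    (2 * √(K * γ) / (γ - 1))
  refine h.congr_fderiv ?_
  rw [smul_smul, cP, show -(γ - 1) / 2 - 1 = -(γ + 1) / 2 by ring]
  congr 1
  have : γ - 1 ≠ 0 := by linarith
  field_simp

theorem hasFDerivAt_cP {K γ : ℝ} {τ : ℝ → ℝ → ℝ} {p : ℝ × ℝ}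
    {τ' : ℝ × ℝ →L[ℝ] ℝ} (hτ : HasFDerivAt (fun p : ℝ × ℝ => τ p.1 p.2) τ' p)
    (hpos : 0 < τ p.1 p.2) :
    HasFDerivAt (fun p : ℝ × ℝ => cP K γ τ p.1 p.2)
      ((-((γ + 1) / (2 * τ p.1 p.2)) * cP K γ τ p.1 p.2) • τ') p := by
  have h := (hτ.rpow_const (p := -(γ + 1) / 2) (Or.inl hpos.ne')).const_mul (√(K * γ))
  refine h.congr_fderiv ?_
  rw [smul_smul, cP, rpow_sub_one hpos.ne']
  congr 1
  field_simp

theorem cP_pos {K γ : ℝ} (hK : 0 < K) (hγ : 1 < γ) {τ : ℝ → ℝ → ℝ} {x t : ℝ}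
    (hpos : 0 < τ x t) : 0 < cP K γ τ x t :=
  mul_pos (sqrt_pos.mpr (by positivity)) (rpow_pos_of_pos hpos _)

/-- The wave speed is a monotone function of `η`. -/
theorem cP_le_of_etaP_le {K γ : ℝ} (hK : 0 < K) (hγ : 1 < γ) (E : ℝ) :
    ∃ Λ, 0 ≤ Λ ∧ ∀ (τ : ℝ → ℝ → ℝ) (x t : ℝ), 0 < τ x t → etaP K γ τ x t ≤ E →
      cP K γ τ x t ≤ Λ := by
  have hq : 0 < √(K * γ) := sqrt_pos.mpr (by positivity)
  have hγ1 : 0 < γ - 1 := by linarith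
  set A : ℝ := 2 * √(K * γ) / (γ - 1) with hA
  have hApos : 0 < A := by positivity
  refine ⟨√(K * γ) * |E / A| ^ ((γ + 1) / (γ - 1)), by positivity, fun τ x t hpos hE => ?_⟩
  have h1 : τ x t ^ (-(γ - 1) / 2) ≤ |E / A| := by
    refine le_trans ?_ (le_abs_self _)
    rw [le_div_iff₀ hApos, mul_comm]
    exact hE
  have h2 : τ x t ^ (-(γ + 1) / 2) = (τ x t ^ (-(γ - 1) / 2)) ^ ((γ + 1) / (γ - 1)) := by
    rw [← rpow_mul hpos.le]
    congr 1
    field_simp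
  rw [cP, h2]
  exact mul_le_mul_of_nonneg_left
    (rpow_le_rpow (rpow_nonneg hpos.le _) h1 (by positivity)) hq.le

/-- At interior points, the p-system diagonalises in the Riemann invariants. -/
theorem riemann_invariants_transport {K γ : ℝ} (hK : 0 < K) (hγ : 1 < γ) {u τ : ℝ → ℝ → ℝ}
    {p : ℝ × ℝ} (hu : DifferentiableAt ℝ (fun p : ℝ × ℝ => u p.1 p.2) p)
    (hτ : DifferentiableAt ℝ (fun p : ℝ × ℝ => τ p.1 p.2) p)
    (hpos : 0 < τ p.1 p.2) (h : pSystem K γ u τ p.1 p.2) :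
    fderiv ℝ (fun p : ℝ × ℝ => sRi K γ u τ p.1 p.2) p (0, 1) +
      cP K γ τ p.1 p.2 * fderiv ℝ (fun p : ℝ × ℝ => sRi K γ u τ p.1 p.2) p (1, 0) = 0 ∧
    fderiv ℝ (fun p : ℝ × ℝ => rRi K γ u τ p.1 p.2) p (0, 1) +
      -cP K γ τ p.1 p.2 * fderiv ℝ (fun p : ℝ × ℝ => rRi K γ u τ p.1 p.2) p (1, 0) = 0 := by
  have hη := hasFDerivAt_etaP (K := K) hγ hτ.hasFDerivAt hpos
  have hs : HasFDerivAt (fun p : ℝ × ℝ => sRi K γ u τ p.1 p.2) _ p := hu.hasFDerivAt.add hη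
  have hr : HasFDerivAt (fun p : ℝ × ℝ => rRi K γ u τ p.1 p.2) _ p := hu.hasFDerivAt.sub hη
  have hlx : HasDerivAt (fun y : ℝ => (y, p.2)) ((1 : ℝ), (0 : ℝ)) p.1 :=
    (hasDerivAt_id _).prodMk (hasDerivAt_const _ _)
  have hlt : HasDerivAt (fun s : ℝ => (p.1, s)) ((0 : ℝ), (1 : ℝ)) p.2 :=
    (hasDerivAt_const _ _).prodMk (hasDerivAt_id _)
  have hux : pdx u p.1 p.2 = fderiv ℝ (fun p : ℝ × ℝ => u p.1 p.2) p (1, 0) :=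
    (HasFDerivAt.comp_hasDerivAt_of_eq p.1 hu.hasFDerivAt hlx rfl).deriv
  have hut : pdt u p.1 p.2 = fderiv ℝ (fun p : ℝ × ℝ => u p.1 p.2) p (0, 1) :=
    (HasFDerivAt.comp_hasDerivAt_of_eq p.2 hu.hasFDerivAt hlt rfl).deriv
  have hτt : pdt τ p.1 p.2 = fderiv ℝ (fun p : ℝ × ℝ => τ p.1 p.2) p (0, 1) :=
    (HasFDerivAt.comp_hasDerivAt_of_eq p.2 hτ.hasFDerivAt hlt rfl).deriv
  have hpx : pdx (fun y s => K * τ y s ^ (-γ)) p.1 p.2 =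
      -(cP K γ τ p.1 p.2 ^ 2 * fderiv ℝ (fun p : ℝ × ℝ => τ p.1 p.2) p (1, 0)) := by
    have hP := (hτ.hasFDerivAt.rpow_const (p := -γ) (Or.inl hpos.ne')).const_mul K
    refine (HasFDerivAt.comp_hasDerivAt_of_eq p.1 hP hlx rfl).deriv.trans ?_
    have hsq : cP K γ τ p.1 p.2 ^ 2 = K * γ * τ p.1 p.2 ^ (-γ - 1) := by
      rw [cP, mul_pow, sq_sqrt (by positivity), ← rpow_natCast, ← rpow_mul hpos.le]
      congr 2
      push_cast
      ring
    rw [hsq]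
    simp only [smul_apply, smul_eq_mul]
    ring
  obtain ⟨h1, h2⟩ := h
  rw [hτt, hux] at h1
  rw [hut, hpx] at h2
  rw [hs.fderiv, hr.fderiv]
  simp only [add_apply, sub_apply,
    smul_apply, smul_eq_mul]
  constructor
  · linear_combination h2 - cP K γ τ p.1 p.2 * h1
  · linear_combination h2 + cP K γ τ p.1 p.2 * h1

section Solution

variable {K γ : ℝ} {T : EReal} {u τ : ℝ → ℝ → ℝ}

theorem contDiffOn_sRi (hu_reg : ContDiffOn ℝ 2 (fun p : ℝ × ℝ => u p.1 p.2) (strip T))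
    (hτ_reg : ContDiffOn ℝ 2 (fun p : ℝ × ℝ => τ p.1 p.2) (strip T))
    (hτ_pos : ∀ x t : ℝ, 0 ≤ t → (t : EReal) < T → 0 < τ x t) :
    ContDiffOn ℝ 2 (fun p : ℝ × ℝ => sRi K γ u τ p.1 p.2) (strip T) :=
  hu_reg.add (contDiffOn_etaP hτ_reg hτ_pos)

theorem contDiffOn_rRi (hu_reg : ContDiffOn ℝ 2 (fun p : ℝ × ℝ => u p.1 p.2) (strip T))
    (hτ_reg : ContDiffOn ℝ 2 (fun p : ℝ × ℝ => τ p.1 p.2) (strip T))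
    (hτ_pos : ∀ x t : ℝ, 0 ≤ t → (t : EReal) < T → 0 < τ x t) :
    ContDiffOn ℝ 2 (fun p : ℝ × ℝ => rRi K γ u τ p.1 p.2) (strip T) :=
  hu_reg.sub (contDiffOn_etaP hτ_reg hτ_pos)

theorem hasDerivAt_sRi_rRi (hu_reg : ContDiffOn ℝ 2 (fun p : ℝ × ℝ => u p.1 p.2) (strip T))
    (hτ_reg : ContDiffOn ℝ 2 (fun p : ℝ × ℝ => τ p.1 p.2) (strip T))
    (hτ_pos : ∀ x t : ℝ, 0 ≤ t → (t : EReal) < T → 0 < τ x t) {x t : ℝ}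
    (h : (x, t) ∈ strip T) :
    HasDerivAt (fun y => sRi K γ u τ y t) (alphaP K γ u τ x t) x ∧
    HasDerivAt (fun y => rRi K γ u τ y t) (betaP K γ u τ x t) x := by
  have h1 : HasDerivAt (fun y => u y t) (pdx u x t) x :=
    (hasDerivAt_slice hu_reg h).differentiableAt.hasDerivAt
  have h2 : HasDerivAt (fun y => etaP K γ τ y t) (pdx (etaP K γ τ) x t) x :=
    (hasDerivAt_slice (contDiffOn_etaP hτ_reg hτ_pos) h).differentiableAt.hasDerivAt
  exact ⟨h1.add h2, h1.sub h2⟩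

theorem alphaP_eq_fderivWithin
    (hu_reg : ContDiffOn ℝ 2 (fun p : ℝ × ℝ => u p.1 p.2) (strip T))
    (hτ_reg : ContDiffOn ℝ 2 (fun p : ℝ × ℝ => τ p.1 p.2) (strip T))
    (hτ_pos : ∀ x t : ℝ, 0 ≤ t → (t : EReal) < T → 0 < τ x t) {p : ℝ × ℝ} (h : p ∈ strip T) :
    alphaP K γ u τ p.1 p.2 =
      fderivWithin ℝ (fun p : ℝ × ℝ => sRi K γ u τ p.1 p.2) (strip T) p (1, 0) :=
  (hasDerivAt_sRi_rRi hu_reg hτ_reg hτ_pos h).1.unique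
    (hasDerivAt_slice (contDiffOn_sRi hu_reg hτ_reg hτ_pos) h)

theorem betaP_eq_fderivWithin
    (hu_reg : ContDiffOn ℝ 2 (fun p : ℝ × ℝ => u p.1 p.2) (strip T))
    (hτ_reg : ContDiffOn ℝ 2 (fun p : ℝ × ℝ => τ p.1 p.2) (strip T))
    (hτ_pos : ∀ x t : ℝ, 0 ≤ t → (t : EReal) < T → 0 < τ x t) {p : ℝ × ℝ} (h : p ∈ strip T) :
    betaP K γ u τ p.1 p.2 =
      fderivWithin ℝ (fun p : ℝ × ℝ => rRi K γ u τ p.1 p.2) (strip T) p (1, 0) :=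
  (hasDerivAt_sRi_rRi hu_reg hτ_reg hτ_pos h).2.unique
    (hasDerivAt_slice (contDiffOn_rRi hu_reg hτ_reg hτ_pos) h)

theorem continuousOn_fderivWithin_strip (hT : 0 < T) {F : ℝ × ℝ → ℝ}
    (hF : ContDiffOn ℝ 2 F (strip T)) (w : ℝ × ℝ) :
    ContinuousOn (fun p => fderivWithin ℝ F (strip T) p w) (strip T) :=
  (hF.continuousOn_fderivWithin (uniqueDiffOn_strip hT) (by norm_num)).clm_apply
    continuousOn_const

theorem eventually_strip_interior {p : ℝ × ℝ} (h₀ : 0 < p.2) (hT : (p.2 : EReal) < T) :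
    ∀ᶠ q : ℝ × ℝ in 𝓝 p, 0 < q.2 ∧ (q.2 : EReal) < T :=
  (isOpen_strip_interior T).mem_nhds ⟨h₀, hT⟩

/-- The Riccati system `α_t + c α_x = k α (β - α)`, `β_t - c β_x = k β (α - β)`,
where `k = (γ + 1) / (4 τ)`. -/
theorem riccati_alphaP_betaP (hK : 0 < K) (hγ : 1 < γ)
    (hu_reg : ContDiffOn ℝ 2 (fun p : ℝ × ℝ => u p.1 p.2) (strip T))
    (hτ_reg : ContDiffOn ℝ 2 (fun p : ℝ × ℝ => τ p.1 p.2) (strip T))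
    (hτ_pos : ∀ x t : ℝ, 0 ≤ t → (t : EReal) < T → 0 < τ x t)
    (hpde : ∀ x t : ℝ, 0 ≤ t → (t : EReal) < T → pSystem K γ u τ x t)
    {p : ℝ × ℝ} (h₀ : 0 < p.2) (hT : (p.2 : EReal) < T) :
    (DifferentiableAt ℝ (fun q : ℝ × ℝ => alphaP K γ u τ q.1 q.2) p ∧
      fderiv ℝ (fun q : ℝ × ℝ => alphaP K γ u τ q.1 q.2) p (cP K γ τ p.1 p.2, 1) =
        (γ + 1) / (4 * τ p.1 p.2) *
          (alphaP K γ u τ p.1 p.2 * (betaP K γ u τ p.1 p.2 - alphaP K γ u τ p.1 p.2))) ∧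
    (DifferentiableAt ℝ (fun q : ℝ × ℝ => betaP K γ u τ q.1 q.2) p ∧
      fderiv ℝ (fun q : ℝ × ℝ => betaP K γ u τ q.1 q.2) p (-cP K γ τ p.1 p.2, 1) =
        (γ + 1) / (4 * τ p.1 p.2) *
          (betaP K γ u τ p.1 p.2 * (alphaP K γ u τ p.1 p.2 - betaP K γ u τ p.1 p.2))) := by
  have hS := contDiffOn_sRi (K := K) (γ := γ) hu_reg hτ_reg hτ_pos
  have hR := contDiffOn_rRi (K := K) (γ := γ) hu_reg hτ_reg hτ_pos
  have hev := eventually_strip_interior h₀ hT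
  have hu : ∀ q : ℝ × ℝ, 0 < q.2 → (q.2 : EReal) < T →
      DifferentiableAt ℝ (fun p : ℝ × ℝ => u p.1 p.2) q := fun q hq hqT =>
    (hu_reg.contDiffAt (strip_mem_nhds hq hqT)).differentiableAt (by norm_num)
  have hτ : ∀ q : ℝ × ℝ, 0 < q.2 → (q.2 : EReal) < T →
      DifferentiableAt ℝ (fun p : ℝ × ℝ => τ p.1 p.2) q := fun q hq hqT =>
    (hτ_reg.contDiffAt (strip_mem_nhds hq hqT)).differentiableAt (by norm_num)
  have hpos := hτ_pos p.1 p.2 h₀.le hT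
  have hα : (fun q : ℝ × ℝ => alphaP K γ u τ q.1 q.2) =ᶠ[𝓝 p]
      fun q => fderiv ℝ (fun p : ℝ × ℝ => sRi K γ u τ p.1 p.2) q (1, 0) := by
    filter_upwards [hev] with q hq
    rw [alphaP_eq_fderivWithin hu_reg hτ_reg hτ_pos ⟨hq.1.le, hq.2⟩,
      fderivWithin_of_mem_nhds (strip_mem_nhds hq.1 hq.2)]
  have hβ : (fun q : ℝ × ℝ => betaP K γ u τ q.1 q.2) =ᶠ[𝓝 p]
      fun q => fderiv ℝ (fun p : ℝ × ℝ => rRi K γ u τ p.1 p.2) q (1, 0) := by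
    filter_upwards [hev] with q hq
    rw [betaP_eq_fderivWithin hu_reg hτ_reg hτ_pos ⟨hq.1.le, hq.2⟩,
      fderivWithin_of_mem_nhds (strip_mem_nhds hq.1 hq.2)]
  have htrans : ∀ᶠ q : ℝ × ℝ in 𝓝 p, _ ∧ _ := hev.mono fun q hq =>
    riemann_invariants_transport hK hγ (hu q hq.1 hq.2) (hτ q hq.1 hq.2)
      (hτ_pos q.1 q.2 hq.1.le hq.2) (hpde q.1 q.2 hq.1.le hq.2)
  have hc := hasFDerivAt_cP (K := K) (γ := γ) (hτ p h₀ hT).hasFDerivAt hpos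
  have hη := hasFDerivAt_etaP (K := K) hγ (hτ p h₀ hT).hasFDerivAt hpos
  have hs : HasFDerivAt (fun p : ℝ × ℝ => sRi K γ u τ p.1 p.2) _ p :=
    (hu p h₀ hT).hasFDerivAt.add hη
  have hr : HasFDerivAt (fun p : ℝ × ℝ => rRi K γ u τ p.1 p.2) _ p :=
    (hu p h₀ hT).hasFDerivAt.sub hη
  obtain ⟨hdα, heα⟩ := fderiv_gradient_of_transport
    (hS.contDiffAt (strip_mem_nhds h₀ hT)) hc.differentiableAt (htrans.mono fun _ h => h.1)
  obtain ⟨hdβ, heβ⟩ := fderiv_gradient_of_transport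
    (hR.contDiffAt (strip_mem_nhds h₀ hT)) hc.differentiableAt.fun_neg
    (htrans.mono fun _ h => h.2)
  have hcx : fderiv ℝ (fun p : ℝ × ℝ => cP K γ τ p.1 p.2) p (1, 0) =
      (γ + 1) / (4 * τ p.1 p.2) *
        (alphaP K γ u τ p.1 p.2 - betaP K γ u τ p.1 p.2) := by
    have h1 := hα.eq_of_nhds
    have h2 := hβ.eq_of_nhds
    rw [h1, h2, hs.fderiv, hr.fderiv, hc.fderiv]
    simp only [add_apply, sub_apply, smul_apply, smul_eq_mul]
    field_simp
    ring
  refine ⟨⟨hdα.congr_of_eventuallyEq hα, ?_⟩, ⟨hdβ.congr_of_eventuallyEq hβ, ?_⟩⟩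
  · rw [hα.fderiv_eq, heα, hcx, ← hα.eq_of_nhds]
    ring
  · rw [hβ.fderiv_eq, heβ, fderiv_fun_neg, neg_apply, hcx, ← hβ.eq_of_nhds]
    ring

/-- Uniform bounds on the Riemann invariants that persist in time. -/
theorem sRi_le_and_neg_rRi_le (hK : 0 < K) (hγ : 1 < γ)
    (hu_reg : ContDiffOn ℝ 2 (fun p : ℝ × ℝ => u p.1 p.2) (strip T))
    (hτ_reg : ContDiffOn ℝ 2 (fun p : ℝ × ℝ => τ p.1 p.2) (strip T))
    (hτ_pos : ∀ x t : ℝ, 0 ≤ t → (t : EReal) < T → 0 < τ x t)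
    (hpde : ∀ x t : ℝ, 0 ≤ t → (t : EReal) < T → pSystem K γ u τ x t)
    {m : ℝ} (hs : ∀ x, sRi K γ u τ x 0 ≤ m) (hr : ∀ x, -rRi K γ u τ x 0 ≤ m)
    {t₂ : ℝ} (ht₂ : (t₂ : EReal) < T) (x t : ℝ) (ht₀ : 0 ≤ t) (ht : t ≤ t₂) :
    sRi K γ u τ x t ≤ m + (1 + t) ∧ -rRi K γ u τ x t ≤ m + (1 + t) := by
  have hS := contDiffOn_sRi (K := K) (γ := γ) hu_reg hτ_reg hτ_pos
  have hR := contDiffOn_rRi (K := K) (γ := γ) hu_reg hτ_reg hτ_pos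
  have hsub : {p : ℝ × ℝ | 0 ≤ p.2 ∧ p.2 ≤ t₂} ⊆ strip T := fun p hp =>
    ⟨hp.1, (EReal.coe_le_coe_iff.mpr hp.2).trans_lt ht₂⟩
  have hlt : ∀ p : ℝ × ℝ, p.2 ≤ t₂ → (p.2 : EReal) < T := fun p hp =>
    (EReal.coe_le_coe_iff.mpr hp).trans_lt ht₂
  have htr : ∀ p : ℝ × ℝ, 0 < p.2 → p.2 ≤ t₂ → _ ∧ _ := fun p hp hp₂ =>
    riemann_invariants_transport hK hγ
      ((hu_reg.contDiffAt (strip_mem_nhds hp (hlt p hp₂))).differentiableAt (by norm_num))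
      ((hτ_reg.contDiffAt (strip_mem_nhds hp (hlt p hp₂))).differentiableAt (by norm_num))
      (hτ_pos p.1 p.2 hp.le (hlt p hp₂)) (hpde p.1 p.2 hp.le (hlt p hp₂))
  obtain ⟨Λ, hΛ, hcΛ⟩ := cP_le_of_etaP_le hK hγ (m + (1 + t₂))
  have hdir : ∀ (L : ℝ × ℝ →L[ℝ] ℝ) (v : ℝ), L (v, 1) = L (0, 1) + v * L (1, 0) := by
    intro L v
    have : ((v, 1) : ℝ × ℝ) = (0, 1) + v • ((1, 0) : ℝ × ℝ) := by simp
    rw [this, map_add, map_smul, smul_eq_mul]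
  have key := le_of_opposite_transport (f := fun p => sRi K γ u τ p.1 p.2)
    (g := fun p => -rRi K γ u τ p.1 p.2) (c := fun p => cP K γ τ p.1 p.2) (m := m) (ε := 1)
    (t₀ := 0) (t₂ := t₂) one_pos hΛ (hS.continuousOn.mono hsub) (hR.continuousOn.mono hsub).neg
    (fun p hp hp₂ => (hS.contDiffAt (strip_mem_nhds hp (hlt p hp₂))).differentiableAt
      (by norm_num))
    (fun p hp hp₂ => ((hR.contDiffAt (strip_mem_nhds hp (hlt p hp₂))).differentiableAt
      (by norm_num)).neg)
    hs hr (fun p hp hp₂ => (cP_pos hK hγ (hτ_pos p.1 p.2 hp.le (hlt p hp₂))).le)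
    (fun p hp hp₂ h1 h2 => by
      refine hcΛ τ p.1 p.2 (hτ_pos p.1 p.2 hp.le (hlt p hp₂)) ?_
      simp only [sRi, rRi] at h1 h2
      linarith)
    (fun p hp hp₂ _ _ => by
      rw [hdir, (htr p hp hp₂).1]
      exact one_pos)
    (fun p hp hp₂ _ _ => by
      rw [fderiv_fun_neg, neg_apply, hdir, (htr p hp hp₂).2]
      simp)
    x t ht₀ ht
  simpa using key

end Solution

/-- the maximum rarefaction `sup_x max{α,β}` is non-increasing in time. -/
theorem psystem_max_rarefaction_nonincreasing
    (K γ : ℝ) (hK : 0 < K) (hγ : 1 < γ)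
    (T : EReal) (hT : 0 < T)
    (u τ : ℝ → ℝ → ℝ)
    (hu_reg : ContDiffOn ℝ 2 (fun p : ℝ × ℝ => u p.1 p.2) (strip T))
    (hτ_reg : ContDiffOn ℝ 2 (fun p : ℝ × ℝ => τ p.1 p.2) (strip T))
    (hτ_pos : ∀ x t : ℝ, 0 ≤ t → (t : EReal) < T → 0 < τ x t)
    (hpde : ∀ x t : ℝ, 0 ≤ t → (t : EReal) < T → pSystem K γ u τ x t)
    (hbdd : ∃ C : ℝ, ∀ x : ℝ, |u x 0| ≤ C ∧ τ x 0 ≤ C ∧ 1 / τ x 0 ≤ C ∧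
      |alphaP K γ u τ x 0| ≤ C ∧ |betaP K γ u τ x 0| ≤ C) :
    ∀ t₁ t₂ : ℝ, 0 ≤ t₁ → t₁ ≤ t₂ → (t₂ : EReal) < T →
      (⨆ x : ℝ, ((max (alphaP K γ u τ x t₂) (betaP K γ u τ x t₂) : ℝ) : EReal)) ≤
      (⨆ x : ℝ, ((max (alphaP K γ u τ x t₁) (betaP K γ u τ x t₁) : ℝ) : EReal)) := by
  intro t₁ t₂ ht₁ ht₁₂ ht₂
  obtain ⟨C, hC⟩ := hbdd
  have hlt : ∀ t : ℝ, t ≤ t₂ → (t : EReal) < T := fun t h =>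
    (EReal.coe_le_coe_iff.mpr h).trans_lt ht₂
  obtain ⟨m, hm⟩ : ∃ m, ∀ x, sRi K γ u τ x 0 ≤ m ∧ -rRi K γ u τ x 0 ≤ m := by
    have hγ1 : 0 < γ - 1 := by linarith
    refine ⟨C + 2 * √(K * γ) / (γ - 1) * C ^ ((γ - 1) / 2), fun x => ?_⟩
    obtain ⟨hu, -, hρ, -, -⟩ := hC x
    have hpos := hτ_pos x 0 le_rfl hT
    have hη : etaP K γ τ x 0 ≤ 2 * √(K * γ) / (γ - 1) * C ^ ((γ - 1) / 2) := by
      refine mul_le_mul_of_nonneg_left ?_ (by positivity)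
      rw [neg_div, rpow_neg hpos.le, ← inv_rpow hpos.le, ← one_div]
      exact rpow_le_rpow (by positivity) hρ (by positivity)
    rw [abs_le] at hu
    simp only [sRi, rRi]
    constructor <;> linarith
  have hsr := sRi_le_and_neg_rRi_le hK hγ hu_reg hτ_reg hτ_pos hpde
    (fun x => (hm x).1) (fun x => (hm x).2) ht₂
  obtain ⟨Λ, hΛ, hcΛ⟩ := cP_le_of_etaP_le hK hγ (m + (1 + t₂))
  have hle : ∀ x, ((max (alphaP K γ u τ x t₁) (betaP K γ u τ x t₁) : ℝ) : EReal) ≤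
      ⨆ x : ℝ, ((max (alphaP K γ u τ x t₁) (betaP K γ u τ x t₁) : ℝ) : EReal) :=
    fun x => le_iSup (fun x : ℝ =>
      ((max (alphaP K γ u τ x t₁) (betaP K γ u τ x t₁) : ℝ) : EReal)) x
  generalize (⨆ x : ℝ, ((max (alphaP K γ u τ x t₁) (betaP K γ u τ x t₁) : ℝ) : EReal)) = M
    at hle ⊢
  induction M with
  | bot => exact absurd (hle 0) (by simp)
  | top => exact le_top
  | coe M =>
    simp only [EReal.coe_le_coe_iff, max_le_iff] at hle
    -- `M < 0` would make `s(·, t₁)` unbounded above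
    have hM : 0 ≤ M := by
      by_contra hM
      rw [not_le] at hM
      have hd : ∀ x, HasDerivAt (fun y => sRi K γ u τ y t₁) (alphaP K γ u τ x t₁) x := fun x =>
        (hasDerivAt_sRi_rRi hu_reg hτ_reg hτ_pos ⟨ht₁, hlt t₁ ht₁₂⟩).1
      have hgrow : ∀ y : ℝ, y ≤ 0 → sRi K γ u τ 0 t₁ - sRi K γ u τ y t₁ ≤ M * (0 - y) :=
        fun y hy => image_sub_le_mul_sub_of_deriv_le (fun x => (hd x).differentiableAt)
          (fun x => (hd x).deriv ▸ (hle x).1) hy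
      set D := |m + (1 + t₁) - sRi K γ u τ 0 t₁| + 1 with hD
      have hDpos : 0 < D := by positivity
      have h1 := hgrow (D / M) (div_nonpos_of_nonneg_of_nonpos hDpos.le hM.le)
      have h2 : M * (0 - D / M) = -D := by
        have := hM.ne
        field_simp
        ring
      have h3 := (hsr (D / M) t₁ ht₁ ht₁₂).1
      have h4 := le_abs_self (m + (1 + t₁) - sRi K γ u τ 0 t₁)
      linarith
    have hsub : {p : ℝ × ℝ | t₁ ≤ p.2 ∧ p.2 ≤ t₂} ⊆ strip T := fun p hp =>
      ⟨ht₁.trans hp.1, hlt _ hp.2⟩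
    have hric := fun (p : ℝ × ℝ) (hp : t₁ < p.2) (hp₂ : p.2 ≤ t₂) =>
      riccati_alphaP_betaP hK hγ hu_reg hτ_reg hτ_pos hpde (ht₁.trans_lt hp) (hlt _ hp₂)
    have hpos : ∀ p : ℝ × ℝ, t₁ < p.2 → p.2 ≤ t₂ → 0 < τ p.1 p.2 := fun p hp hp₂ =>
      hτ_pos p.1 p.2 (ht₁.trans hp.le) (hlt _ hp₂)
    have hsign : ∀ k a b ε : ℝ, 0 < k → 0 < ε → 0 ≤ a → b ≤ a → k * (a * (b - a)) < ε :=
      fun k a b ε hk hε ha hb => lt_of_le_of_lt (mul_nonpos_of_nonneg_of_nonpos hk.le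
        (mul_nonpos_of_nonneg_of_nonpos ha (sub_nonpos.mpr hb))) hε
    have key := fun (ε : ℝ) (hε : 0 < ε) (x : ℝ) => le_of_opposite_transport
      (f := fun p => alphaP K γ u τ p.1 p.2) (g := fun p => betaP K γ u τ p.1 p.2)
      (c := fun p => cP K γ τ p.1 p.2) (m := M) hε hΛ
      (((continuousOn_fderivWithin_strip hT (contDiffOn_sRi hu_reg hτ_reg hτ_pos) (1, 0)).congr
        fun p hp => alphaP_eq_fderivWithin hu_reg hτ_reg hτ_pos hp).mono hsub)
      (((continuousOn_fderivWithin_strip hT (contDiffOn_rRi hu_reg hτ_reg hτ_pos) (1, 0)).congr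
        fun p hp => betaP_eq_fderivWithin hu_reg hτ_reg hτ_pos hp).mono hsub)
      (fun p hp hp₂ => (hric p hp hp₂).1.1) (fun p hp hp₂ => (hric p hp hp₂).2.1)
      (fun x => (hle x).1) (fun x => (hle x).2)
      (fun p hp hp₂ => (cP_pos hK hγ (hpos p hp hp₂)).le)
      (fun p hp hp₂ _ _ => by
        refine hcΛ τ p.1 p.2 (hpos p hp hp₂) ?_
        have h := hsr p.1 p.2 (ht₁.trans hp.le) hp₂
        simp only [sRi, rRi] at h
        linarith [h.1, h.2])
      (fun p hp hp₂ heq hba => by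
        rw [(hric p hp hp₂).1.2]
        have h0 : 0 ≤ alphaP K γ u τ p.1 p.2 := by
          rw [heq]
          have := sub_pos.mpr hp
          positivity
        exact hsign _ _ _ ε (by have := hpos p hp hp₂; positivity) hε h0 hba)
      (fun p hp hp₂ heq hab => by
        rw [(hric p hp hp₂).2.2]
        have h0 : 0 ≤ betaP K γ u τ p.1 p.2 := by
          rw [heq]
          have := sub_pos.mpr hp
          positivity
        exact hsign _ _ _ ε (by have := hpos p hp hp₂; positivity) hε h0 hab)
      x t₂ ht₁₂ le_rfl
    have hlast : ∀ x, max (alphaP K γ u τ x t₂) (betaP K γ u τ x t₂) ≤ M := by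
      intro x
      refine le_of_forall_pos_le_add fun δ hδ => ?_
      have hden : 0 < 1 + (t₂ - t₁) := by linarith
      have h := key (δ / (1 + (t₂ - t₁))) (by positivity) x
      rw [div_mul_cancel₀ _ hden.ne'] at h
      exact max_le h.1 h.2
    exact iSup_le fun x => EReal.coe_le_coe_iff.mpr (hlast x)
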